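/- arXiv:math-ph/0608069 — 2 statements merged into one kernel-verified Lean document; each statement's English description precedes it below -/
import Mathlib

section
/- Let y₁,…,y_n ∈ ℝ³ satisfy |y_i − y_j| ≥ R/5 for all i ≠ j, let 0 ≤ λ < π/2, and let 0 < R₀ < R/10. Then for every φ ∈ H¹(ℝ³): ∫_{ℝ³} |∇φ(x)|² dx − (λ²/R₀²) ∑_{i=1}^n ∫_{|x−y_i|≤R₀} |φ(x)|² dx ≥ − (3R₀/((R/10)³ − R₀³)) · (tan λ / λ − 1) · ∑_{i=1}^n ∫_{|x−y_i|≤R/10} |φ(x)|² dx. (For λ=0 the factor tan λ/λ − 1 is interpreted as 0.) -/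
/-!
The balls of radius `ρ = R / 10` around the points overlap only in null sets, so it suffices to
prove the inequality on one such ball (`ball_ineq`) and to sum. On one ball only the radial
derivative is used: it is bounded by the operator norm of `fderiv ℝ φ`, and polar coordinates
(`nonneg_integral_of_radial`) reduce the claim to an inequality on almost every ray
(`radial_ineq`). There the function `f r = φ (c + r • ω)` is differentiable, and `N r`, the norm of
`fderiv ℝ φ` at `c + r • ω`, bounds `‖f' r‖`.

The inequality on a ray is obtained by completing the square. For a real function `h`,
`(h ‖f‖²)' = h' ‖f‖² + 2 h ⟪f, f'⟫ ≤ r² N² + (h' + h² / r²) ‖f‖²`,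
so a bound `h' + h² / r² ≤ q r²` controls the boundary terms of `h ‖f‖²` by
`∫ r² N² + q ∫ r² ‖f‖²` (`riccati_step`). Write `k = λ / R₀`.

* For `r ≤ R₀` take `h = r² u' / u` with the ground state `u = sin (k r) / r`. Then
  `h' + h² / r² = - k² r²`, `h 0 = 0` and `h R₀ = - R₀ (1 - λ / tan λ)` (`inner_region`).
* For `R₀ ≤ r ≤ ρ` take `h = - θ w`, where `w = r b / (r + b)`, with `b = R₀ (tan λ / λ - 1)`,
  solves the zero-energy equation `w' = w² / r²`, and the cutoff
  `θ = (ρ³ - r³) / (ρ³ - R₀³)` decreases from `1` to `0`. Then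
  `h' + h² / r² ≤ - θ' w ≤ 3 b r² / (ρ³ - R₀³)` (`outer_region`).

With this `b` the two values of `h` at `R₀` agree, so the boundary terms cancel when the two
estimates are added.
-/

open MeasureTheory

/-! ### Reduction to rays -/

open Set Metric Measure in
/-- Polar coordinates in `ℝ³`: an integral is nonnegative if it is nonnegative along rays.
The second integrable function `P` serves to discard a null set of directions: only rays along
which `r² P` is integrable have to be considered. -/
lemma nonneg_integral_of_radial {G P : EuclideanSpace ℝ (Fin 3) → ℝ}
    (hG : Integrable G) (hP : Integrable P)
    (h : ∀ ω : EuclideanSpace ℝ (Fin 3), ‖ω‖ = 1 →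
      IntegrableOn (fun r : ℝ => r ^ 2 * P (r • ω)) (Ioi 0) →
      0 ≤ ∫ r in Ioi (0 : ℝ), r ^ 2 * G (r • ω)) :
    0 ≤ ∫ x, G x := by
  let E := EuclideanSpace ℝ (Fin 3)
  have hdim : Module.finrank ℝ E - 1 = 2 := by simp [E]
  have mp := (volume : Measure E).measurePreserving_homeomorphUnitSphereProd
  rw [hdim] at mp
  have me := (homeomorphUnitSphereProd E).measurableEmbedding
  -- composing with the polar coordinates
  have key : ∀ (F : E → ℝ) (z : ({0}ᶜ : Set E)),
      (fun p : sphere (0 : E) 1 × Ioi (0 : ℝ) => F (p.2.1 • p.1.1))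
        (homeomorphUnitSphereProd E z) = F z := by
    intro F z
    have := homeomorphUnitSphereProd_symm_apply_coe E (homeomorphUnitSphereProd E z)
    simp only [Homeomorph.symm_apply_apply] at this
    simp only
    rw [← this]
  have hint : ∀ F : E → ℝ, Integrable F → Integrable
      (fun p : sphere (0 : E) 1 × Ioi (0 : ℝ) => F (p.2.1 • p.1.1))
      ((volume : Measure E).toSphere.prod (volumeIoiPow 2)) := by
    intro F hF
    rw [← mp.integrable_comp_emb me]
    have h1 : IntegrableOn F {0}ᶜ := hF.integrableOn
    rw [integrableOn_iff_comap_subtypeVal (measurableSet_singleton _).compl] at h1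
    exact h1.congr (Filter.Eventually.of_forall fun z => (key F z).symm)
  have hval : ∫ x, G x = ∫ p : sphere (0 : E) 1 × Ioi (0 : ℝ), G (p.2.1 • p.1.1)
      ∂((volume : Measure E).toSphere.prod (volumeIoiPow 2)) := by
    have h0 : ∫ x, G x = ∫ x in ({0}ᶜ : Set E), G x := by rw [restrict_compl_singleton]
    rw [h0, ← mp.integral_comp me, ← integral_subtype_comap (measurableSet_singleton _).compl]
    exact integral_congr_ae (Filter.Eventually.of_forall fun z => (key G z).symm)
  have hm : Measurable fun r : Ioi (0 : ℝ) => Real.toNNReal (r.1 ^ 2) :=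
    (measurable_subtype_coe.pow_const _).real_toNNReal
  rw [hval, integral_prod _ (hint G hG)]
  refine integral_nonneg_of_ae ?_
  filter_upwards [(hint P hP).prod_right_ae] with ω hω
  have hω1 : ‖ω.1‖ = 1 := by simp
  have hsm : ∀ (F : E → ℝ) (r : Ioi (0 : ℝ)), Real.toNNReal (r.1 ^ 2) • F (r.1 • ω.1)
      = r.1 ^ 2 * F (r.1 • ω.1) := by
    intro F r
    rw [NNReal.smul_def, Real.coe_toNNReal _ (sq_nonneg _), smul_eq_mul]
  have hPω : IntegrableOn (fun r : ℝ => r ^ 2 * P (r • ω.1)) (Ioi 0) := by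
    rw [integrableOn_iff_comap_subtypeVal measurableSet_Ioi]
    simp only [volumeIoiPow, ENNReal.ofReal] at hω
    rw [integrable_withDensity_iff_integrable_smul hm] at hω
    exact hω.congr (Filter.Eventually.of_forall fun r => hsm P r)
  have := h ω.1 hω1 hPω
  simp only [volumeIoiPow, ENNReal.ofReal, Pi.zero_apply]
  rw [integral_withDensity_eq_integral_smul hm]
  simp only [hsm]
  rwa [integral_subtype_comap measurableSet_Ioi fun r : ℝ => r ^ 2 * G (r • ω.1)]

/-! ### The one-dimensional inequality -/

open Set in
/-- A function `h` with `h' + h² / r² ≤ q r²` bounds the increment of `h ‖f‖²`, by completing the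
square. The derivative `f'` is not assumed to be integrable: only its majorant `N` is. -/
lemma riccati_step {a b q : ℝ} (ha : 0 ≤ a) (hab : a ≤ b) {h h' : ℝ → ℝ}
    (hc : ContinuousOn h (Icc a b)) (hd : ∀ r ∈ Ioo a b, HasDerivAt h (h' r) r)
    (hq : ∀ r ∈ Ioo a b, h' r + h r ^ 2 / r ^ 2 ≤ q * r ^ 2)
    {f f' : ℝ → ℂ} (hf : ∀ r, HasDerivAt f (f' r) r) {N : ℝ → ℝ} (hN : ∀ r, ‖f' r‖ ≤ N r)
    (hint : IntegrableOn (fun r => r ^ 2 * N r ^ 2) (Icc a b)) :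
    h b * ‖f b‖ ^ 2 - h a * ‖f a‖ ^ 2 ≤
      (∫ r in a..b, r ^ 2 * N r ^ 2) + q * ∫ r in a..b, r ^ 2 * ‖f r‖ ^ 2 := by
  have hfc : Continuous f := continuous_iff_continuousAt.2 fun r => (hf r).continuousAt
  have hi2 : Continuous (fun r => r ^ 2 * ‖f r‖ ^ 2) := by fun_prop
  rw [← intervalIntegral.integral_const_mul, ← intervalIntegral.integral_add
    ((intervalIntegrable_iff_integrableOn_Icc_of_le hab).2 hint)
    ((hi2.const_mul q |>.intervalIntegrable _ _))]
  refine intervalIntegral.sub_le_integral_of_hasDeriv_right_of_le (g := fun r => h r * ‖f r‖ ^ 2)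
    (g' := fun r => h' r * ‖f r‖ ^ 2 + h r * (2 * inner ℝ (f r) (f' r))) hab
    (hc.mul (by fun_prop)) (fun r hr => ((hd r hr).mul (hf r).norm_sq).hasDerivWithinAt)
    (hint.add (hi2.const_mul q).continuousOn.integrableOn_Icc) ?_
  intro r hr
  have hr0 : 0 < r := ha.trans_lt hr.1
  have h1 : |inner ℝ (f r) (f' r)| ≤ ‖f r‖ * N r :=
    (abs_real_inner_le_norm _ _).trans (by gcongr; exact hN r)
  have h2 : h r * inner ℝ (f r) (f' r) ≤ |h r| * (‖f r‖ * N r) := by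
    refine (le_abs_self _).trans ?_
    rw [abs_mul]
    gcongr
  -- the completed square
  have h3 : 0 ≤ (r * N r - |h r| / r * ‖f r‖) ^ 2 := sq_nonneg _
  have h4 : (r * N r - |h r| / r * ‖f r‖) ^ 2 =
      r ^ 2 * N r ^ 2 - 2 * (|h r| * (‖f r‖ * N r)) + h r ^ 2 / r ^ 2 * ‖f r‖ ^ 2 := by
    rw [← sq_abs (h r)]
    field_simp
    ring
  have h5 := mul_le_mul_of_nonneg_right (hq r hr) (sq_nonneg ‖f r‖)
  nlinarith

open Set in
/-- The estimate on `[0, R₀]`, from the logarithmic derivative of `sin (k r) / r` with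
`k = lam / R₀`. -/
lemma inner_region {R₀ lam : ℝ} (hl0 : 0 < lam) (hl : lam < Real.pi / 2) (hR₀ : 0 < R₀)
    {f f' : ℝ → ℂ} (hf : ∀ r, HasDerivAt f (f' r) r) {N : ℝ → ℝ} (hN : ∀ r, ‖f' r‖ ≤ N r)
    (hint : IntegrableOn (fun r => r ^ 2 * N r ^ 2) (Icc 0 R₀)) :
    R₀ * (lam / Real.tan lam - 1) * ‖f R₀‖ ^ 2 ≤
      (∫ r in 0..R₀, r ^ 2 * N r ^ 2)
        + -(lam ^ 2 / R₀ ^ 2) * ∫ r in 0..R₀, r ^ 2 * ‖f r‖ ^ 2 := by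
  set k := lam / R₀ with hk
  have hk0 : 0 < k := by positivity
  have hkr : ∀ r ∈ Icc 0 R₀, k * r ≤ lam := by
    intro r hr
    rw [hk, div_mul_eq_mul_div, div_le_iff₀ hR₀]
    exact mul_le_mul_of_nonneg_left hr.2 hl0.le
  have hsin : ∀ r ∈ Ioc 0 R₀, 0 < Real.sin (k * r) := by
    intro r hr
    exact Real.sin_pos_of_pos_of_lt_pi (mul_pos hk0 hr.1)
      (by linarith [hkr r ⟨hr.1.le, hr.2⟩, Real.pi_pos])
  -- the `sinc` form makes continuity at the origin visible
  let h : ℝ → ℝ := fun r => r * (Real.cos (k * r) / Real.sinc (k * r) - 1)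
  have hh : ∀ r, 0 < r → h r = k * r ^ 2 * Real.cos (k * r) / Real.sin (k * r) - r := by
    intro r hr
    have : k * r ≠ 0 := by positivity
    simp only [h, Real.sinc_of_ne_zero this]
    rw [div_div_eq_mul_div]
    ring
  have hc : ContinuousOn h (Icc 0 R₀) := by
    have h0 : ∀ r ∈ Icc 0 R₀, Real.sinc (k * r) ≠ 0 := by
      intro r hr
      rcases hr.1.eq_or_lt with h0 | h0
      · simp [← h0]
      · rw [Real.sinc_of_ne_zero (by positivity)]
        have := hsin r ⟨h0, hr.2⟩
        positivity
    have h1 : Continuous fun r => Real.sinc (k * r) :=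
      Real.continuous_sinc.comp (continuous_const.mul continuous_id)
    refine continuousOn_id.mul ((ContinuousOn.div ?_ h1.continuousOn h0).sub continuousOn_const)
    fun_prop
  have hd : ∀ r ∈ Ioo 0 R₀, HasDerivAt h (((2 * k * r * Real.cos (k * r) +
      k * r ^ 2 * (-Real.sin (k * r) * k)) * Real.sin (k * r) -
      k * r ^ 2 * Real.cos (k * r) * (Real.cos (k * r) * k)) / Real.sin (k * r) ^ 2 - 1) r := by
    intro r hr
    have hs := hsin r ⟨hr.1, hr.2.le⟩
    have e : h =ᶠ[nhds r] fun r => k * r ^ 2 * Real.cos (k * r) / Real.sin (k * r) - r :=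
      (lt_mem_nhds hr.1).mono fun x hx => hh x hx
    refine HasDerivAt.congr_of_eventuallyEq ?_ e
    have hlin : HasDerivAt (fun r : ℝ => k * r) k r := by
      simpa using (hasDerivAt_id r).const_mul k
    have hsq : HasDerivAt (fun r : ℝ => k * r ^ 2) (2 * k * r) r := by
      exact ((hasDerivAt_pow 2 r).const_mul k).congr_deriv (by push_cast; ring)
    exact ((hsq.mul hlin.cos).div hlin.sin hs.ne').sub (hasDerivAt_id r)
  have main := riccati_step (q := -(lam ^ 2 / R₀ ^ 2)) le_rfl hR₀.le hc hd (fun r hr => ?_)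
    hf hN hint
  · have e1 : h R₀ = R₀ * (lam / Real.tan lam - 1) := by
      have hkR : k * R₀ = lam := by rw [hk]; field_simp
      rw [hh R₀ hR₀, Real.tan_eq_sin_div_cos, div_div_eq_mul_div, hkR,
        show k * R₀ ^ 2 = R₀ * lam by rw [← hkR]; ring]
      ring
    have e2 : h 0 = 0 := by simp [h]
    rw [e1, e2] at main
    simpa using main
  · have hs := hsin r ⟨hr.1, hr.2.le⟩
    have hr0 : 0 < r := hr.1
    rw [hh r hr0, show lam ^ 2 / R₀ ^ 2 = k ^ 2 by rw [hk, div_pow]]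
    apply le_of_eq
    generalize Real.sin (k * r) = s at *
    generalize Real.cos (k * r) = c at *
    field_simp
    ring

open Set in
/-- The estimate on `[R₀, ρ]`, for an arbitrary parameter `b ≥ 0`. It uses the logarithmic
derivative of the zero-energy solution `1 / r + 1 / b`, cut off by
`(ρ³ - r³) / (ρ³ - R₀³)` so that there is no boundary term at `ρ`. -/
lemma outer_region {R₀ ρ b : ℝ} (hb : 0 ≤ b) (hR₀ : 0 < R₀) (hρ : R₀ < ρ)
    {f f' : ℝ → ℂ} (hf : ∀ r, HasDerivAt f (f' r) r) {N : ℝ → ℝ} (hN : ∀ r, ‖f' r‖ ≤ N r)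
    (hint : IntegrableOn (fun r => r ^ 2 * N r ^ 2) (Icc R₀ ρ)) :
    R₀ * b / (R₀ + b) * ‖f R₀‖ ^ 2 ≤
      (∫ r in R₀..ρ, r ^ 2 * N r ^ 2)
        + 3 * b / (ρ ^ 3 - R₀ ^ 3) * ∫ r in R₀..ρ, r ^ 2 * ‖f r‖ ^ 2 := by
  have hD : 0 < ρ ^ 3 - R₀ ^ 3 := sub_pos.2 (pow_lt_pow_left₀ hρ hR₀.le (by norm_num))
  set D := ρ ^ 3 - R₀ ^ 3 with hDdef
  let h : ℝ → ℝ := fun r => -((ρ ^ 3 - r ^ 3) / D * (r * b / (r + b)))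
  have hd : ∀ r, 0 < r → HasDerivAt h (-(-(3 * r ^ 2) / D * (r * b / (r + b)) +
      (ρ ^ 3 - r ^ 3) / D * ((b * (r + b) - r * b) / (r + b) ^ 2))) r := by
    intro r hr
    have h1 : HasDerivAt (fun r : ℝ => (ρ ^ 3 - r ^ 3) / D) (-(3 * r ^ 2) / D) r := by
      have := ((hasDerivAt_pow 3 r).const_sub (ρ ^ 3)).div_const D
      simpa using this
    have h2 : HasDerivAt (fun r : ℝ => r * b) b r := by
      simpa using (hasDerivAt_id r).mul_const b
    have h3 : HasDerivAt (fun r : ℝ => r + b) 1 r := (hasDerivAt_id r).add_const b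
    have h4 := h2.div h3 (by positivity)
    simp only [mul_one] at h4
    exact (h1.mul h4).neg
  have main := riccati_step (q := 3 * b / D) hR₀.le hρ.le
    (fun r hr => (hd r (hR₀.trans_le hr.1)).continuousAt.continuousWithinAt)
    (fun r hr => hd r (hR₀.trans hr.1)) (fun r hr => ?_) hf hN hint
  · have e1 : h R₀ = -(R₀ * b / (R₀ + b)) := by
      simp only [h]
      rw [← hDdef, div_self hD.ne', one_mul]
    have e2 : h ρ = 0 := by simp [h]
    rw [e1, e2] at main
    simpa using main
  · have hr0 : 0 < r := hR₀.trans hr.1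
    set θ := (ρ ^ 3 - r ^ 3) / D with hθ
    have hθ0 : 0 ≤ θ := div_nonneg
      (sub_nonneg.2 (pow_le_pow_left₀ hr0.le hr.2.le 3)) hD.le
    have hθ1 : θ ≤ 1 := by
      rw [hθ, div_le_one hD, hDdef]
      have := pow_le_pow_left₀ hR₀.le hr.1.le 3
      linarith
    have hw : r * b / (r + b) ≤ b := by
      rw [div_le_iff₀ (by positivity)]
      nlinarith [sq_nonneg b]
    have e : -(-(3 * r ^ 2) / D * (r * b / (r + b)) +
        θ * ((b * (r + b) - r * b) / (r + b) ^ 2)) + h r ^ 2 / r ^ 2 =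
        3 * r ^ 2 / D * (r * b / (r + b)) - θ * (1 - θ) * (b / (r + b)) ^ 2 := by
      have : h r = -(θ * (r * b / (r + b))) := rfl
      rw [this]
      have : r + b ≠ 0 := by positivity
      field_simp
      ring
    rw [e]
    have h1 : 0 ≤ θ * (1 - θ) * (b / (r + b)) ^ 2 :=
      mul_nonneg (mul_nonneg hθ0 (sub_nonneg.2 hθ1)) (sq_nonneg _)
    have h2 : 3 * r ^ 2 / D * (r * b / (r + b)) ≤ 3 * r ^ 2 / D * b := by gcongr
    have h3 : 3 * r ^ 2 / D * b = 3 * b / D * r ^ 2 := by ring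
    linarith

open Set in
/-- The inequality on a ray, `N` being a majorant of `‖f'‖`. -/
lemma radial_ineq {R₀ ρ lam : ℝ} (hl0 : 0 < lam) (hl : lam < Real.pi / 2) (hR₀ : 0 < R₀)
    (hρ : R₀ < ρ) {f f' : ℝ → ℂ} (hf : ∀ r, HasDerivAt f (f' r) r) {N : ℝ → ℝ}
    (hN : ∀ r, ‖f' r‖ ≤ N r) (hint : IntegrableOn (fun r => r ^ 2 * N r ^ 2) (Ioc 0 ρ)) :
    0 ≤ (∫ r in Ioc 0 ρ, r ^ 2 * N r ^ 2) +
      3 * R₀ / (ρ ^ 3 - R₀ ^ 3) * (Real.tan lam / lam - 1) * (∫ r in Ioc 0 ρ, r ^ 2 * ‖f r‖ ^ 2)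
      - lam ^ 2 / R₀ ^ 2 * ∫ r in Ioc 0 R₀, r ^ 2 * ‖f r‖ ^ 2 := by
  have hD : 0 < ρ ^ 3 - R₀ ^ 3 := sub_pos.2 (pow_lt_pow_left₀ hρ hR₀.le (by norm_num))
  have hρ0 : 0 < ρ := hR₀.trans hρ
  have hfc : Continuous f := continuous_iff_continuousAt.2 fun r => (hf r).continuousAt
  have hi2 : Continuous (fun r => r ^ 2 * ‖f r‖ ^ 2) := by fun_prop
  have htan : lam < Real.tan lam := Real.lt_tan hl0 hl
  have ht0 : 0 < Real.tan lam := hl0.trans htan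
  have hT : 0 < Real.tan lam / lam - 1 := by
    rw [sub_pos, lt_div_iff₀ hl0]; linarith
  have hint' : IntegrableOn (fun r => r ^ 2 * N r ^ 2) (Icc 0 ρ) :=
    (integrableOn_Icc_iff_integrableOn_Ioc (by simp)).2 hint
  have hA := hint'.mono_set (Icc_subset_Icc_right hρ.le)
  have hB := hint'.mono_set (Icc_subset_Icc_left hR₀.le)
  have h1 := inner_region hl0 hl hR₀ hf hN hA
  have h2 := outer_region (b := R₀ * (Real.tan lam / lam - 1)) (by positivity) hR₀ hρ hf hN hB
  -- the boundary terms at `R₀` cancel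
  have e : R₀ * (R₀ * (Real.tan lam / lam - 1)) / (R₀ + R₀ * (Real.tan lam / lam - 1)) =
      -(R₀ * (lam / Real.tan lam - 1)) := by
    have : R₀ + R₀ * (Real.tan lam / lam - 1) = R₀ * (Real.tan lam / lam) := by ring
    rw [this]
    field_simp
    ring
  have e3 : 3 * (R₀ * (Real.tan lam / lam - 1)) / (ρ ^ 3 - R₀ ^ 3) =
      3 * R₀ / (ρ ^ 3 - R₀ ^ 3) * (Real.tan lam / lam - 1) := by ring
  rw [e, e3] at h2
  have hC : 0 ≤ 3 * R₀ / (ρ ^ 3 - R₀ ^ 3) * (Real.tan lam / lam - 1) := by positivity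
  simp only [← intervalIntegral.integral_of_le hρ0.le, ← intervalIntegral.integral_of_le hR₀.le]
  rw [← intervalIntegral.integral_add_adjacent_intervals
      ((intervalIntegrable_iff_integrableOn_Icc_of_le hR₀.le).2 hA)
      ((intervalIntegrable_iff_integrableOn_Icc_of_le hρ.le).2 hB),
    ← intervalIntegral.integral_add_adjacent_intervals
      (hi2.intervalIntegrable 0 R₀) (hi2.intervalIntegrable R₀ ρ)]
  have hpos : 0 ≤ ∫ r in 0..R₀, r ^ 2 * ‖f r‖ ^ 2 :=
    intervalIntegral.integral_nonneg hR₀.le fun r _ => by positivity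
  have := mul_nonneg hC hpos
  rw [mul_add]
  linarith

/-! ### Balls in `ℝ³` -/

open Set Metric in
/-- The inequality on a single ball. -/
lemma ball_ineq {R₀ ρ lam : ℝ} (hl0 : 0 < lam) (hl : lam < Real.pi / 2) (hR₀ : 0 < R₀)
    (hρ : R₀ < ρ) (c : EuclideanSpace ℝ (Fin 3)) {φ : EuclideanSpace ℝ (Fin 3) → ℂ}
    (hdiff : Differentiable ℝ φ)
    (hH1 : Integrable (fun x : EuclideanSpace ℝ (Fin 3) => ‖fderiv ℝ φ x‖ ^ 2)) :
    0 ≤ (∫ x in closedBall c ρ, ‖fderiv ℝ φ x‖ ^ 2) +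
      3 * R₀ / (ρ ^ 3 - R₀ ^ 3) * (Real.tan lam / lam - 1) * (∫ x in closedBall c ρ, ‖φ x‖ ^ 2)
      - lam ^ 2 / R₀ ^ 2 * ∫ x in closedBall c R₀, ‖φ x‖ ^ 2 := by
  set C := 3 * R₀ / (ρ ^ 3 - R₀ ^ 3) * (Real.tan lam / lam - 1)
  have hφc : Continuous φ := hdiff.continuous
  let E := EuclideanSpace ℝ (Fin 3)
  -- translate the centre to the origin
  have trans : ∀ (F : E → ℝ) (s : ℝ), ∫ x in closedBall c s, F x =
      ∫ x, (closedBall (0 : E) s).indicator (fun x => F (c + x)) x := by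
    intro F s
    rw [← integral_indicator measurableSet_closedBall, ← integral_add_left_eq_self _ c]
    congr 1
    ext x
    simp [indicator]
  have iN : Integrable ((closedBall (0 : E) ρ).indicator
      (fun x => ‖fderiv ℝ φ (c + x)‖ ^ 2)) :=
    (hH1.comp_add_left c).indicator measurableSet_closedBall
  have iφ : ∀ s, Integrable ((closedBall (0 : E) s).indicator (fun x => ‖φ (c + x)‖ ^ 2)) := by
    intro s
    rw [integrable_indicator_iff measurableSet_closedBall]
    have : Continuous fun x : E => ‖φ (c + x)‖ ^ 2 := by fun_prop
    exact this.continuousOn.integrableOn_compact (isCompact_closedBall _ _)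
  have iS : Integrable (fun x => (closedBall (0 : E) ρ).indicator
      (fun x => ‖fderiv ℝ φ (c + x)‖ ^ 2) x +
      C * (closedBall (0 : E) ρ).indicator (fun x => ‖φ (c + x)‖ ^ 2) x) :=
    iN.add ((iφ ρ).const_mul C)
  rw [trans, trans, trans, ← integral_const_mul, ← integral_const_mul, ← integral_add iN
    ((iφ ρ).const_mul C), ← integral_sub iS ((iφ R₀).const_mul _)]
  -- integrability of the gradient term selects the rays; the other terms are continuous
  refine nonneg_integral_of_radial (iS.sub ((iφ R₀).const_mul _)) iN ?_
  intro ω hω hPω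
  -- restriction of an indicator function to the ray through `ω`
  have ray : ∀ (F : E → ℝ) (s : ℝ), ∀ r ∈ Ioi (0 : ℝ),
      r ^ 2 * (closedBall (0 : E) s).indicator F (r • ω) =
      (Ioc 0 s).indicator (fun r => r ^ 2 * F (r • ω)) r := by
    intro F s r hr
    have hr' : 0 < r := hr
    have : r • ω ∈ closedBall (0 : E) s ↔ r ∈ Ioc 0 s := by
      simp [norm_smul, hω, abs_of_pos hr', hr']
    by_cases hm : r ∈ Ioc 0 s
    · rw [indicator_of_mem hm, indicator_of_mem (this.2 hm)]
    · rw [indicator_of_notMem hm, indicator_of_notMem (fun h => hm (this.1 h)), mul_zero]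
  have sub : ∀ s, Ioi (0 : ℝ) ∩ Ioc 0 s = Ioc 0 s := fun s =>
    inter_eq_right.2 fun x hx => hx.1
  have rayint : ∀ (F : E → ℝ) (s : ℝ),
      ∫ r in Ioi (0 : ℝ), r ^ 2 * (closedBall (0 : E) s).indicator F (r • ω) =
      ∫ r in Ioc 0 s, r ^ 2 * F (r • ω) := by
    intro F s
    rw [setIntegral_congr_fun measurableSet_Ioi (ray F s), setIntegral_indicator measurableSet_Ioc,
      sub]
  have rayIntble : ∀ (F : E → ℝ) (s : ℝ),
      IntegrableOn (fun r => r ^ 2 * (closedBall (0 : E) s).indicator F (r • ω)) (Ioi 0) ↔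
      IntegrableOn (fun r => r ^ 2 * F (r • ω)) (Ioc 0 s) := by
    intro F s
    rw [integrableOn_congr_fun (ray F s) measurableSet_Ioi, IntegrableOn,
      integrable_indicator_iff measurableSet_Ioc, IntegrableOn,
      Measure.restrict_restrict measurableSet_Ioc, inter_comm, sub,
      ← IntegrableOn]
  have jφ : ∀ s, IntegrableOn (fun r => r ^ 2 *
      (closedBall (0 : E) s).indicator (fun x => ‖φ (c + x)‖ ^ 2) (r • ω)) (Ioi 0) := by
    intro s
    rw [rayIntble]
    have : Continuous fun r : ℝ => r ^ 2 * ‖φ (c + r • ω)‖ ^ 2 := by fun_prop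
    exact this.integrableOn_Ioc
  have hd : ∀ r : ℝ, HasDerivAt (fun r : ℝ => φ (c + r • ω)) (fderiv ℝ φ (c + r • ω) ω) r := by
    intro r
    have h1 : HasDerivAt (fun r : ℝ => c + r • ω) ω r := by
      simpa using ((hasDerivAt_id r).smul_const ω).const_add c
    exact (hdiff (c + r • ω)).hasFDerivAt.comp_hasDerivAt r h1
  have key := radial_ineq hl0 hl hR₀ hρ hd (N := fun r => ‖fderiv ℝ φ (c + r • ω)‖)
    (fun r => by simpa [hω] using (fderiv ℝ φ (c + r • ω)).le_opNorm ω)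
    ((rayIntble _ _).1 hPω)
  have jS : IntegrableOn (fun r => r ^ 2 * (closedBall (0 : E) ρ).indicator
      (fun x => ‖fderiv ℝ φ (c + x)‖ ^ 2) (r • ω) +
      C * (r ^ 2 * (closedBall (0 : E) ρ).indicator (fun x => ‖φ (c + x)‖ ^ 2) (r • ω)))
      (Ioi 0) := hPω.add ((jφ ρ).const_mul C)
  refine key.trans_eq ?_
  rw [← rayint (fun x => ‖fderiv ℝ φ (c + x)‖ ^ 2), ← rayint (fun x => ‖φ (c + x)‖ ^ 2),
    ← rayint (fun x => ‖φ (c + x)‖ ^ 2), ← integral_const_mul, ← integral_const_mul,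
    ← integral_add hPω ((jφ ρ).const_mul C),
    ← integral_sub jS ((jφ R₀).const_mul _)]
  congr 1
  ext r
  ring

open Set Metric in
/-- The separation only makes the open balls disjoint; closed balls differ from them by spheres,
which are null sets. -/
lemma sum_integral_closedBall_le {n : ℕ} {y : Fin n → EuclideanSpace ℝ (Fin 3)} {ρ : ℝ}
    (hsep : ∀ i j, i ≠ j → 2 * ρ ≤ dist (y i) (y j))
    {F : EuclideanSpace ℝ (Fin 3) → ℝ} (hF : Integrable F) (hF0 : ∀ x, 0 ≤ F x) :
    ∑ i, ∫ x in closedBall (y i) ρ, F x ≤ ∫ x, F x := by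
  have hae : ∀ i, ∫ x in closedBall (y i) ρ, F x = ∫ x in ball (y i) ρ, F x := by
    intro i
    refine setIntegral_congr_set (ae_eq_of_subset_of_measure_ge ball_subset_closedBall
      ?_ measurableSet_ball.nullMeasurableSet measure_closedBall_lt_top.ne).symm
    rw [Measure.addHaar_closedBall_eq_addHaar_ball]
  simp only [hae]
  rw [← integral_iUnion_fintype (fun _ => measurableSet_ball) (fun i j hij => ?_)
    (fun _ => hF.integrableOn)]
  · exact setIntegral_le_integral hF (Filter.Eventually.of_forall hF0)
  · exact ball_disjoint_ball (by linarith [hsep i j hij])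


/-- "Filling the holes" lemma on ℝ³: for points y₁,…,y_n with pairwise distances ≥ R/5,
0 ≤ λ < π/2 and 0 < R₀ < R/10,
∫|∇φ|² − (λ²/R₀²) ∑ᵢ ∫_{|x−yᵢ|≤R₀}|φ|² ≥
−(3R₀/((R/10)³−R₀³))(tanλ/λ − 1) ∑ᵢ ∫_{|x−yᵢ|≤R/10}|φ|²
for every φ ∈ H¹(ℝ³) (the factor tanλ/λ − 1 being interpreted as 0 for λ = 0). -/
theorem stmt_6 (n : ℕ) (y : Fin n → EuclideanSpace ℝ (Fin 3)) (R R₀ lam : ℝ)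
    (hsep : ∀ i j, i ≠ j → R / 5 ≤ dist (y i) (y j))
    (hlam0 : 0 ≤ lam) (hlam : lam < Real.pi / 2)
    (hR₀ : 0 < R₀) (hR : R₀ < R / 10)
    (φ : EuclideanSpace ℝ (Fin 3) → ℂ)
    (hdiff : Differentiable ℝ φ)
    (hL2 : Integrable (fun x : EuclideanSpace ℝ (Fin 3) => ‖φ x‖ ^ 2))
    (hH1 : Integrable (fun x : EuclideanSpace ℝ (Fin 3) => ‖fderiv ℝ φ x‖ ^ 2)) :
    (∫ x : EuclideanSpace ℝ (Fin 3), ‖fderiv ℝ φ x‖ ^ 2) -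
        lam ^ 2 / R₀ ^ 2 * ∑ i, ∫ x in Metric.closedBall (y i) R₀, ‖φ x‖ ^ 2 ≥
      -(3 * R₀ / ((R / 10) ^ 3 - R₀ ^ 3)) *
          (if lam = 0 then 0 else Real.tan lam / lam - 1) *
          ∑ i, ∫ x in Metric.closedBall (y i) (R / 10), ‖φ x‖ ^ 2 := by

  have hgrad : 0 ≤ ∫ x : EuclideanSpace ℝ (Fin 3), ‖fderiv ℝ φ x‖ ^ 2 :=
    integral_nonneg fun x => sq_nonneg _
  rcases hlam0.eq_or_lt with h0 | h0
  · simpa [← h0] using hgrad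
  rw [if_neg h0.ne']
  have h1 := sum_integral_closedBall_le (ρ := R / 10) (y := y)
    (fun i j hij => by linarith [hsep i j hij]) hH1 (fun x => sq_nonneg _)
  have h2 := Finset.sum_nonneg fun i (_ : i ∈ Finset.univ) =>
    ball_ineq h0 hlam hR₀ hR (y i) hdiff hH1
  rw [Finset.sum_sub_distrib, Finset.sum_add_distrib, ← Finset.mul_sum, ← Finset.mul_sum] at h2
  rw [ge_iff_le, neg_mul, neg_mul]
  linarith
end

section
/- Let 0 ≤ λ < π/2 and 0 < R₀ < ρ. Then for every φ ∈ H¹ of the ball {|x| ≤ ρ} in ℝ³: ∫_{|x|≤ρ} |∇φ(x)|² dx − (λ²/R₀²) ∫_{|x|≤R₀} |φ(x)|² dx ≥ − (3R₀/(ρ³ − R₀³)) · (tan λ / λ − 1) · ∫_{|x|≤ρ} |φ(x)|² dx. (For λ=0 the factor tan λ/λ − 1 is interpreted as 0.) -/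
/-! The inequality follows from a ground-state substitution along rays. In polar coordinates it is
enough to bound, for every unit vector `θ`, the weighted integral over `r` of the integrand at
`r • θ`, where only the radial derivative of `φ` (dominated by the operator norm of its derivative)
is needed.

On a ray write `u r = φ (r • θ)`. For any function `G`, completing the square gives
`r² |u'|² + (G²/r² - G') |u|² ≥ -(G |u|²)'` (`ray_estimate`). Two choices of `G = -r² f'/f` are used:
* on `[0, R₀]`, `f = sin (k r) / r` with `k = λ / R₀`, for which `G²/r² - G' = -k² r²` exactly;
* on `[R₀, ρ]`, the zero-energy solution `f = 1 + A / r` with `A = R₀ (tan λ / λ - 1)`, with `G`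
  multiplied by the cut-off `(ρ³ - r³) / (ρ³ - R₀³)`, so that `G ρ = 0` and
  `G²/r² - G' ≤ 3 A / (ρ³ - R₀³) r²`.

Both functions take the value `R₀ (1 - λ / tan λ)` at `R₀`, so the boundary terms there cancel.
The one-sided fundamental theorem of calculus requires no integrability of `u'` on its own. -/

open MeasureTheory
open Set Filter Topology

/-! ### Completing the square, and polar coordinates -/

/-- Completing the square: on an interval, `∫ r² |u'|² + (G²/r² - G') |u|²` dominates the boundary
terms of `-G |u|²`. -/
lemma ray_estimate {a b : ℝ} (ha : 0 ≤ a) (hab : a ≤ b) {u u' : ℝ → ℂ} {G G' h : ℝ → ℝ}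
    (hu : ContinuousOn u (Icc a b)) (hu' : ∀ r ∈ Ioo a b, HasDerivAt u (u' r) r)
    (hG : ContinuousOn G (Icc a b)) (hG' : ∀ r ∈ Ioo a b, HasDerivAt G (G' r) r)
    (hint : IntegrableOn h (Icc a b))
    (hh : ∀ r ∈ Ioo a b,
      r ^ 2 * ‖u' r‖ ^ 2 + ((G r / r) ^ 2 - G' r) * ‖u r‖ ^ 2 ≤ h r) :
    G a * ‖u a‖ ^ 2 - G b * ‖u b‖ ^ 2 ≤ ∫ r in a..b, h r := by
  have key := intervalIntegral.sub_le_integral_of_hasDeriv_right_of_le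
    (g := fun r => -(G r * ‖u r‖ ^ 2))
    (g' := fun r => -(G' r * ‖u r‖ ^ 2 + G r * (2 * inner ℝ (u r) (u' r)))) hab
    ((hG.mul (hu.norm.pow 2)).neg)
    (fun r hr => (((hG' r hr).mul (hu' r hr).norm_sq).neg).hasDerivWithinAt) hint ?_
  · linarith
  · intro r hr
    refine le_trans ?_ (hh r hr)
    have hr0 : 0 < r := lt_of_le_of_lt ha hr.1
    have h1 := abs_real_inner_le_norm (u r) (u' r)
    have h2 : -(G r * inner ℝ (u r) (u' r)) ≤ |G r| * (‖u r‖ * ‖u' r‖) :=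
      (neg_le_abs _).trans (by rw [abs_mul]; gcongr)
    have h3 : |G r| = r * |G r / r| := by
      rw [abs_div, abs_of_pos hr0]; field_simp
    have h4 : |G r / r| ^ 2 = (G r / r) ^ 2 := sq_abs _
    rw [h3] at h2
    nlinarith [sq_nonneg (r * ‖u' r‖ - |G r / r| * ‖u r‖)]

/-- A function on `ℝ³` has nonnegative integral if its weighted integral along each ray is
nonnegative. No integrability is needed, as non-integrable functions have integral `0`. -/
lemma integral_nonneg_of_rays (H : EuclideanSpace ℝ (Fin 3) → ℝ)
    (hH : ∀ θ : EuclideanSpace ℝ (Fin 3), ‖θ‖ = 1 →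
      IntegrableOn (fun r : ℝ => r ^ 2 * H (r • θ)) (Ioi 0) →
      0 ≤ ∫ r in Ioi (0 : ℝ), r ^ 2 * H (r • θ)) :
    0 ≤ ∫ x, H x := by
  have e1 : ∫ x, H x = ∫ p : Metric.sphere (0 : EuclideanSpace ℝ (Fin 3)) 1 × Ioi (0 : ℝ),
      H ((p.2 : ℝ) • (p.1 : EuclideanSpace ℝ (Fin 3)))
        ∂((volume : Measure (EuclideanSpace ℝ (Fin 3))).toSphere.prod
          (.volumeIoiPow (Module.finrank ℝ (EuclideanSpace ℝ (Fin 3)) - 1))) := by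
    have e0 : ∫ x, H x = ∫ x : ({(0)}ᶜ : Set (EuclideanSpace ℝ (Fin 3))), H x
        ∂((volume : Measure (EuclideanSpace ℝ (Fin 3))).comap (↑)) := by
      rw [integral_subtype_comap (measurableSet_singleton _).compl H, restrict_compl_singleton]
    rw [e0, ← (Measure.measurePreserving_homeomorphUnitSphereProd
      (volume : Measure (EuclideanSpace ℝ (Fin 3)))).integral_comp
        (Homeomorph.measurableEmbedding _)]
    refine integral_congr_ae (.of_forall fun x => ?_)
    have hx : ‖(x : EuclideanSpace ℝ (Fin 3))‖ ≠ 0 := norm_ne_zero_iff.mpr x.2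
    simp [smul_smul, hx]
  have e2 : ∀ θ : EuclideanSpace ℝ (Fin 3),
      ∫ r : Ioi (0 : ℝ), H ((r : ℝ) • θ)
        ∂(Measure.volumeIoiPow (Module.finrank ℝ (EuclideanSpace ℝ (Fin 3)) - 1)) =
      ∫ r in Ioi (0 : ℝ), r ^ 2 * H (r • θ) := by
    intro θ
    simp only [Measure.volumeIoiPow, ENNReal.ofReal]
    rw [integral_withDensity_eq_integral_smul,
      integral_subtype_comap measurableSet_Ioi
        fun a : ℝ ↦ Real.toNNReal (a ^ (Module.finrank ℝ (EuclideanSpace ℝ (Fin 3)) - 1)) •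
          H (a • θ)]
    · refine setIntegral_congr_fun measurableSet_Ioi fun x hx ↦ ?_
      have : (0 : ℝ) ≤ x ^ 2 := by positivity
      simp [NNReal.smul_def, this]
    · exact (measurable_subtype_coe.pow_const _).real_toNNReal
  rw [e1]
  by_cases hi : Integrable (fun p : Metric.sphere (0 : EuclideanSpace ℝ (Fin 3)) 1 × Ioi (0 : ℝ) =>
      H ((p.2 : ℝ) • (p.1 : EuclideanSpace ℝ (Fin 3))))
        ((volume : Measure (EuclideanSpace ℝ (Fin 3))).toSphere.prod
          (.volumeIoiPow (Module.finrank ℝ (EuclideanSpace ℝ (Fin 3)) - 1)))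
  · rw [integral_prod _ hi]
    refine integral_nonneg fun θ => ?_
    simp only [e2]
    by_cases hθ : IntegrableOn (fun r : ℝ => r ^ 2 * H (r • (θ : EuclideanSpace ℝ (Fin 3)))) (Ioi 0)
    · exact hH _ (by simp) hθ
    · exact (integral_undef hθ).ge
  · exact (integral_undef hi).ge

/-! ### The two comparison functions -/

/-- The function `-r² f' / f` for `f = sin (k r) / r`; the `sinc` form makes it continuous at `0`. -/
noncomputable def innerG (k r : ℝ) : ℝ := r - r * Real.cos (k * r) / Real.sinc (k * r)

lemma sinc_pos {x : ℝ} (h0 : 0 ≤ x) (h1 : x < Real.pi / 2) : 0 < Real.sinc x := by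
  rcases h0.eq_or_lt with rfl | h
  · simp
  · rw [Real.sinc_of_ne_zero h.ne']
    exact div_pos (Real.sin_pos_of_pos_of_lt_pi h (by linarith [Real.pi_pos])) h

lemma innerG_continuousOn {k R : ℝ} (hk : 0 < k) (hkR : k * R < Real.pi / 2) :
    ContinuousOn (innerG k) (Icc 0 R) := by
  unfold innerG
  refine continuousOn_id.sub (ContinuousOn.div (by fun_prop)
    (Real.continuous_sinc.comp (by fun_prop)).continuousOn fun r hr => ?_)
  exact (sinc_pos (mul_nonneg hk.le hr.1)
    (lt_of_le_of_lt (mul_le_mul_of_nonneg_left hr.2 hk.le) hkR)).ne'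

/-- The Riccati equation `G' = G²/r² + k² r²` expressing `-Δf = k² f`. -/
lemma innerG_hasDerivAt {k R r : ℝ} (hk : 0 < k) (hkR : k * R < Real.pi / 2) (hr : r ∈ Ioo 0 R) :
    HasDerivAt (innerG k) ((innerG k r / r) ^ 2 + k ^ 2 * r ^ 2) r := by
  have hr0 : 0 < r := hr.1
  have hkr : 0 < k * r := mul_pos hk hr0
  have hs : Real.sin (k * r) ≠ 0 := (Real.sin_pos_of_pos_of_lt_pi hkr (by
    nlinarith [Real.pi_pos, mul_lt_mul_of_pos_left hr.2 hk])).ne'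
  have heq : ∀ x : ℝ, 0 < x → innerG k x = x - k * x ^ 2 * Real.cos (k * x) / Real.sin (k * x) := by
    intro x hx
    rw [innerG, Real.sinc_of_ne_zero (mul_pos hk hx).ne', div_div_eq_mul_div]
    ring
  have hlin : HasDerivAt (fun x : ℝ => k * x) k r := by
    simpa using (hasDerivAt_id r).const_mul k
  have hd := (hasDerivAt_id r).sub
    (((((hasDerivAt_id r).pow 2).const_mul k).mul hlin.cos).div hlin.sin hs)
  refine (hd.congr_of_eventuallyEq (f₁ := innerG k) ?_).congr_deriv ?_
  · filter_upwards [lt_mem_nhds hr0] with x hx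
    simpa using heq x hx
  · rw [heq r hr0]
    simp only [id, Pi.mul_apply, Pi.pow_apply]
    field_simp
    generalize Real.sin (k * r) = s at *
    generalize Real.cos (k * r) = c at *
    push_cast
    ring_nf

/-- The function `-r² f' / f = A r / (r + A)` for the zero-energy solution `f = 1 + A / r`, multiplied
by the cut-off `(ρ³ - r³) / (ρ³ - R₀³)`; here `K = A / (ρ³ - R₀³)`. -/
noncomputable def outerG (A K ρ r : ℝ) : ℝ := K * (ρ ^ 3 - r ^ 3) * r / (r + A)

/-- The derivative of `outerG`. -/
noncomputable def outerG' (A K ρ r : ℝ) : ℝ :=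
  K * (-(3 * r ^ 3) / (r + A) + (ρ ^ 3 - r ^ 3) * A / (r + A) ^ 2)

lemma outerG_hasDerivAt {A r : ℝ} (K ρ : ℝ) (h : r + A ≠ 0) :
    HasDerivAt (outerG A K ρ) (outerG' A K ρ r) r := by
  have h1 := (((((hasDerivAt_id r).pow 3).const_sub (ρ ^ 3)).const_mul K).mul
    (hasDerivAt_id r)).div ((hasDerivAt_id r).add_const A) h
  refine h1.congr_deriv ?_
  simp only [id, outerG', Pi.mul_apply, Pi.pow_apply]
  push_cast
  field_simp
  ring

/-- The cut-off costs at most `3 K r²`: without it `G²/r² - G'` vanishes, its derivative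
contributes `3 K r³ / (r + A)`, and the quadratic term `G²/r²` only shrinks. -/
lemma outerG_bound {A K ρ R r : ℝ} (hA : 0 ≤ A) (hK : 0 ≤ K) (hKA : K * (ρ ^ 3 - R ^ 3) = A)
    (hR : 0 < R) (hr : r ∈ Ioo R ρ) :
    (outerG A K ρ r / r) ^ 2 - outerG' A K ρ r ≤ 3 * K * r ^ 2 := by
  have hr0 : 0 < r := hR.trans hr.1
  have h0 : 0 < r + A := by linarith
  have h1 : 0 ≤ ρ ^ 3 - r ^ 3 := by
    have := pow_le_pow_left₀ hr0.le hr.2.le 3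
    linarith
  have h2 : K * (ρ ^ 3 - r ^ 3) ≤ A := by
    have := pow_le_pow_left₀ hR.le hr.1.le 3
    rw [← hKA]; gcongr
  have e : 3 * K * r ^ 2 - ((outerG A K ρ r / r) ^ 2 - outerG' A K ρ r) =
      (3 * K * r ^ 2 * A * (r + A) + K * (ρ ^ 3 - r ^ 3) * (A - K * (ρ ^ 3 - r ^ 3)))
        / (r + A) ^ 2 := by
    unfold outerG outerG'
    field_simp
    ring
  have : 0 ≤ 3 * K * r ^ 2 - ((outerG A K ρ r / r) ^ 2 - outerG' A K ρ r) := by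
    rw [e]
    have := sub_nonneg.mpr h2
    positivity
  linarith

/-- The boundary terms of the two regions agree at `R₀`. -/
lemma innerG_eq_outerG {lam R ρ A K : ℝ} (h0 : 0 < lam) (h1 : lam < Real.pi / 2) (hR : 0 < R)
    (hA : A = R * (Real.tan lam / lam - 1)) (hKA : K * (ρ ^ 3 - R ^ 3) = A) :
    innerG (lam / R) R = outerG A K ρ R := by
  have hc : Real.cos lam ≠ 0 :=
    (Real.cos_pos_of_mem_Ioo ⟨by linarith, h1⟩).ne'
  have hs : Real.sin lam ≠ 0 := (Real.sin_pos_of_pos_of_lt_pi h0 (by linarith)).ne'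
  have e : lam / R * R = lam := by field_simp
  have e2 : R + A = R * (Real.tan lam / lam) := by rw [hA]; ring
  rw [innerG, outerG, e, Real.sinc_of_ne_zero h0.ne', hKA, e2, hA, Real.tan_eq_sin_div_cos]
  field_simp

/-! ### The inequality on a ray and on the ball -/

/-- The one-dimensional inequality along a ray. -/
lemma ray_nonneg {ρ R lam : ℝ} (h0 : 0 < lam) (h1 : lam < Real.pi / 2) (hR : 0 < R) (hρ : R < ρ)
    {u u' : ℝ → ℂ} {h : ℝ → ℝ} (hu : ContinuousOn u (Icc 0 ρ))
    (hu' : ∀ r ∈ Ioo 0 ρ, HasDerivAt u (u' r) r) (hint : IntegrableOn h (Icc 0 ρ))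
    (hin : ∀ r ∈ Ioo 0 R,
      r ^ 2 * ‖u' r‖ ^ 2 - (lam / R) ^ 2 * r ^ 2 * ‖u r‖ ^ 2 ≤ h r)
    (hout : ∀ r ∈ Ioo R ρ, r ^ 2 * ‖u' r‖ ^ 2 +
      3 * (R * (Real.tan lam / lam - 1) / (ρ ^ 3 - R ^ 3)) * r ^ 2 * ‖u r‖ ^ 2 ≤ h r) :
    0 ≤ ∫ r in (0 : ℝ)..ρ, h r := by
  set A := R * (Real.tan lam / lam - 1) with hAdef
  set K := A / (ρ ^ 3 - R ^ 3) with hKdef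
  have hD : 0 < ρ ^ 3 - R ^ 3 := sub_pos.mpr (pow_lt_pow_left₀ hρ hR.le (by norm_num))
  have hA : 0 ≤ A := by
    refine mul_nonneg hR.le (sub_nonneg.mpr ?_)
    rw [one_le_div h0]
    exact (Real.lt_tan h0 h1).le
  have hK : 0 ≤ K := div_nonneg hA hD.le
  have hKA : K * (ρ ^ 3 - R ^ 3) = A := div_mul_cancel₀ _ hD.ne'
  have hk : 0 < lam / R := div_pos h0 hR
  have hkR : lam / R * R < Real.pi / 2 := by rwa [div_mul_cancel₀ _ hR.ne']
  have hs1 : Icc 0 R ⊆ Icc 0 ρ := Icc_subset_Icc_right hρ.le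
  have hs2 : Icc R ρ ⊆ Icc 0 ρ := Icc_subset_Icc_left hR.le
  have i1 := ray_estimate le_rfl hR.le (hu.mono hs1)
    (fun r hr => hu' r ⟨hr.1, hr.2.trans hρ⟩) (innerG_continuousOn hk hkR)
    (fun r hr => innerG_hasDerivAt hk hkR hr) (hint.mono_set hs1)
    (fun r hr => le_trans (le_of_eq (by ring)) (hin r hr))
  have i2 := ray_estimate (G := outerG A K ρ) hR.le hρ.le (hu.mono hs2)
    (fun r hr => hu' r ⟨hR.trans hr.1, hr.2⟩)
    (fun r hr => (outerG_hasDerivAt K ρ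
      (by have := hr.1; linarith)).continuousAt.continuousWithinAt)
    (fun r hr => outerG_hasDerivAt K ρ (by have := hr.1; linarith)) (hint.mono_set hs2)
    (fun r hr => le_trans (by
      have := outerG_bound hA hK hKA hR hr
      gcongr) (hout r hr))
  have e0 : innerG (lam / R) 0 = 0 := by simp [innerG]
  have eρ : outerG A K ρ ρ = 0 := by simp [outerG]
  rw [e0, innerG_eq_outerG h0 h1 hR hAdef hKA] at i1
  rw [eρ] at i2
  have hsplit := intervalIntegral.integral_add_adjacent_intervals
    (f := h) (μ := volume) (a := 0) (b := R) (c := ρ)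
    ((intervalIntegrable_iff_integrableOn_Icc_of_le hR.le).mpr (hint.mono_set hs1))
    ((intervalIntegrable_iff_integrableOn_Icc_of_le hρ.le).mpr (hint.mono_set hs2))
  rw [← hsplit]
  linarith

/-- "Filling the hole" lemma on a ball: for 0 ≤ λ < π/2 and 0 < R₀ < ρ,
∫_{|x|≤ρ}|∇φ|² − (λ²/R₀²) ∫_{|x|≤R₀}|φ|² ≥
−(3R₀/(ρ³−R₀³))(tanλ/λ − 1) ∫_{|x|≤ρ}|φ|²
for every φ ∈ H¹ of the ball {|x| ≤ ρ} in ℝ³ (the factor tanλ/λ − 1 being interpreted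
as 0 for λ = 0). -/
theorem stmt_7 (ρ R₀ lam : ℝ) (hlam0 : 0 ≤ lam) (hlam : lam < Real.pi / 2)
    (hR₀ : 0 < R₀) (hρ : R₀ < ρ)
    (φ : EuclideanSpace ℝ (Fin 3) → ℂ)
    (hdiff : DifferentiableOn ℝ φ
      (Metric.closedBall (0 : EuclideanSpace ℝ (Fin 3)) ρ))
    (hL2 : IntegrableOn (fun x => ‖φ x‖ ^ 2)
      (Metric.closedBall (0 : EuclideanSpace ℝ (Fin 3)) ρ))
    (hH1 : IntegrableOn (fun x =>
        ‖fderivWithin ℝ φ (Metric.closedBall (0 : EuclideanSpace ℝ (Fin 3)) ρ) x‖ ^ 2)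
      (Metric.closedBall (0 : EuclideanSpace ℝ (Fin 3)) ρ)) :
    (∫ x in Metric.closedBall (0 : EuclideanSpace ℝ (Fin 3)) ρ,
          ‖fderivWithin ℝ φ (Metric.closedBall (0 : EuclideanSpace ℝ (Fin 3)) ρ) x‖ ^ 2) -
        lam ^ 2 / R₀ ^ 2 *
          ∫ x in Metric.closedBall (0 : EuclideanSpace ℝ (Fin 3)) R₀, ‖φ x‖ ^ 2 ≥
      -(3 * R₀ / (ρ ^ 3 - R₀ ^ 3)) *
          (if lam = 0 then 0 else Real.tan lam / lam - 1) *
          ∫ x in Metric.closedBall (0 : EuclideanSpace ℝ (Fin 3)) ρ, ‖φ x‖ ^ 2 := by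
  rcases hlam0.eq_or_lt with rfl | h0
  · simp only [if_true]
    have := integral_nonneg (μ := volume.restrict (Metric.closedBall 0 ρ)) (f := fun x =>
      ‖fderivWithin ℝ φ (Metric.closedBall (0 : EuclideanSpace ℝ (Fin 3)) ρ) x‖ ^ 2)
      (fun x => by positivity)
    simpa using this
  rw [if_neg h0.ne']
  have hD : 0 < ρ ^ 3 - R₀ ^ 3 := sub_pos.mpr (pow_lt_pow_left₀ hρ hR₀.le (by norm_num))
  set B := Metric.closedBall (0 : EuclideanSpace ℝ (Fin 3)) ρ with hB
  set B₀ := Metric.closedBall (0 : EuclideanSpace ℝ (Fin 3)) R₀ with hB₀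
  set C := 3 * (R₀ * (Real.tan lam / lam - 1) / (ρ ^ 3 - R₀ ^ 3)) with hC
  have hC0 : 0 ≤ C := by
    have : 0 ≤ Real.tan lam / lam - 1 := by
      rw [sub_nonneg, one_le_div h0]
      exact (Real.lt_tan h0 hlam).le
    positivity
  set H : EuclideanSpace ℝ (Fin 3) → ℝ := fun x =>
    B.indicator (fun x => ‖fderivWithin ℝ φ B x‖ ^ 2 + C * ‖φ x‖ ^ 2) x -
      B₀.indicator (fun x => (lam / R₀) ^ 2 * ‖φ x‖ ^ 2) x with hHdef
  have hBm : MeasurableSet B := measurableSet_closedBall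
  have hB₀m : MeasurableSet B₀ := measurableSet_closedBall
  have hsub : B₀ ⊆ B := Metric.closedBall_subset_closedBall hρ.le
  have hint : ∫ x, H x = (∫ x in B, ‖fderivWithin ℝ φ B x‖ ^ 2) + C * (∫ x in B, ‖φ x‖ ^ 2)
      - (lam / R₀) ^ 2 * ∫ x in B₀, ‖φ x‖ ^ 2 := by
    rw [hHdef, integral_sub, integral_indicator hBm, integral_indicator hB₀m,
      integral_add hH1 (hL2.const_mul C), integral_const_mul, integral_const_mul]
    · exact (integrable_indicator_iff hBm).mpr (hH1.add (hL2.const_mul C))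
    · exact (integrable_indicator_iff hB₀m).mpr ((hL2.mono_set hsub).const_mul _)
  have hpos : 0 ≤ ∫ x, H x := by
    refine integral_nonneg_of_rays H fun θ hθ hi => ?_
    have hnorm : ∀ r : ℝ, 0 ≤ r → ‖r • θ‖ = r := fun r hr => by
      rw [norm_smul, hθ, mul_one, Real.norm_of_nonneg hr]
    have hmem : ∀ r : ℝ, 0 ≤ r → (r • θ ∈ B ↔ r ≤ ρ) := fun r hr => by
      rw [hB, mem_closedBall_zero_iff, hnorm r hr]
    have hmem₀ : ∀ r : ℝ, 0 ≤ r → (r • θ ∈ B₀ ↔ r ≤ R₀) := fun r hr => by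
      rw [hB₀, mem_closedBall_zero_iff, hnorm r hr]
    have hρ0 : 0 < ρ := hR₀.trans hρ
    have hcut : ∫ r in Ioi (0 : ℝ), r ^ 2 * H (r • θ) =
        ∫ r in (0 : ℝ)..ρ, r ^ 2 * H (r • θ) := by
      rw [intervalIntegral.integral_of_le hρ0.le]
      refine (setIntegral_eq_of_subset_of_forall_sdiff_eq_zero measurableSet_Ioi
        (fun r hr => hr.1) fun r hr => ?_)
      have hr0 : 0 < r := hr.1
      have hr1 : ¬ r ≤ ρ := fun h => hr.2 ⟨hr0, h⟩
      have hr2 : ¬ r ≤ R₀ := fun h => hr1 (h.trans hρ.le)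
      simp [hHdef, hmem r hr0.le, hmem₀ r hr0.le, hr1, hr2]
    rw [hcut]
    have hlin : ∀ r : ℝ, HasDerivAt (fun r : ℝ => r • θ) θ r := fun r => by
      simpa using (hasDerivAt_id r).smul_const θ
    have hle : ∀ r : ℝ, ‖fderivWithin ℝ φ B (r • θ) θ‖ ^ 2 ≤ ‖fderivWithin ℝ φ B (r • θ)‖ ^ 2 :=
      fun r => by
        have := (fderivWithin ℝ φ B (r • θ)).le_opNorm θ
        rw [hθ, mul_one] at this
        gcongr
    refine ray_nonneg (u := fun r => φ (r • θ)) (u' := fun r => fderivWithin ℝ φ B (r • θ) θ)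
      h0 hlam hR₀ hρ ?_ ?_ ?_ ?_ ?_
    · exact hdiff.continuousOn.comp (by fun_prop) fun r hr => (hmem r hr.1).mpr hr.2
    · intro r hr
      have hn : B ∈ 𝓝 (r • θ) := by
        refine mem_of_superset (Metric.isOpen_ball.mem_nhds ?_) Metric.ball_subset_closedBall
        rw [mem_ball_zero_iff, hnorm r hr.1.le]
        exact hr.2
      have hd := (hdiff _ (mem_of_mem_nhds hn)).hasFDerivWithinAt.hasFDerivAt hn
      exact hd.comp_hasDerivAt r (hlin r)
    · rw [integrableOn_Icc_iff_integrableOn_Ioc]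
      exact hi.mono_set fun r hr => hr.1
    · intro r hr
      have h3 : r • θ ∈ B := (hmem r hr.1.le).mpr (hr.2.le.trans hρ.le)
      have h4 : r • θ ∈ B₀ := (hmem₀ r hr.1.le).mpr hr.2.le
      simp only [hHdef, indicator_of_mem h3, indicator_of_mem h4]
      have : 0 ≤ r ^ 2 * (C * ‖φ (r • θ)‖ ^ 2) := by positivity
      nlinarith [mul_le_mul_of_nonneg_left (hle r) (sq_nonneg r)]
    · intro r hr
      have hr0 : 0 < r := hR₀.trans hr.1
      have h3 : r • θ ∈ B := (hmem r hr0.le).mpr hr.2.le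
      have h4 : r • θ ∉ B₀ := fun h => absurd ((hmem₀ r hr0.le).mp h) (not_le.mpr hr.1)
      simp only [hHdef, indicator_of_mem h3, indicator_of_notMem h4]
      nlinarith [mul_le_mul_of_nonneg_left (hle r) (sq_nonneg r)]
  rw [hint] at hpos
  have e1 : lam ^ 2 / R₀ ^ 2 = (lam / R₀) ^ 2 := (div_pow _ _ _).symm
  have e2 : -(3 * R₀ / (ρ ^ 3 - R₀ ^ 3)) * (Real.tan lam / lam - 1) = -C := by
    rw [hC]; ring
  rw [e1, e2]
  linarith
end
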